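/- Let (G, ξ) be a centered bivariate Gaussian vector with covariance matrix [[a, c], [c, b]], a, b > 0, |c| < √(ab), and M = G + ξ. Then as m → ∞, E[G² | M > m] = ((a+c)²/(a+b+2c)²)·m² + (a+c)²/(a+b+2c) + a - 2(a+c)²/m² + o(m⁻²). -/

import Mathlib

open MeasureTheory ProbabilityTheory Filter Asymptotics Real

/-- Expectation of `X` conditioned on an event `s` (i.e. `E[X·1ₛ]/P(s)`). -/
noncomputable def condExpEvent {Ω : Type*} [MeasureSpace Ω] (X : Ω → ℝ) (s : Set Ω) : ℝ :=
  (∫ ω in s, X ω) / (ℙ s).toReal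

/-!
Put `M = G + ξ`, `S = a + b + 2c = Var M` and `r = (a + c) / S`. The residual `R = G - r M` is
uncorrelated with `M`, hence independent of it, so
`E[G² | M > m] = r² E[M² | M > m] + Var R`. Gaussian integration by parts on `(m, ∞)` gives
`E[M² | M > m] = S + S m λ(m)`, where `λ` is the density of `M` over its tail. The same identity,
applied to a partial sum `q` of the asymptotic series of `1 / λ`, exhibits `q` times the density as
the integral of `1 + 15 S³ / x⁶` over the tail; hence `q λ = 1 + O(m⁻⁶)`, which inverts to
`S m λ(m) = m² + S - 2 S² / m² + O(m⁻⁴)`.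
-/

open Set
open scoped Topology NNReal

section GaussianDensity

variable {v : ℝ≥0}

lemma hasDerivAt_gaussianPDFReal (μ : ℝ) (v : ℝ≥0) (x : ℝ) :
    HasDerivAt (gaussianPDFReal μ v) (-((x - μ) / v) * gaussianPDFReal μ v x) x := by
  have hexponent : HasDerivAt (fun y : ℝ ↦ -(y - μ) ^ 2 / (2 * v))
      (-(2 * (x - μ)) / (2 * v)) x := by
    simpa using ((((hasDerivAt_id x).sub_const μ).pow 2).neg).div_const (2 * (v : ℝ))
  rw [gaussianPDFReal_def]
  refine (hexponent.exp.const_mul _).congr_deriv ?_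
  ring

lemma tendsto_pow_mul_gaussianPDFReal_atTop (hv : v ≠ 0) (n : ℕ) :
    Tendsto (fun x ↦ x ^ n * gaussianPDFReal 0 v x) atTop (𝓝 0) := by
  have hdecay : Tendsto (fun x : ℝ ↦ |x| ^ (n : ℝ) * rexp (-(2 * (v : ℝ))⁻¹ * x ^ 2)) atTop (𝓝 0) :=
    (tendsto_rpow_abs_mul_exp_neg_mul_sq_cocompact (by positivity) n).mono_left atTop_le_cocompact
  have hscaled := hdecay.const_mul (√(2 * π * v))⁻¹
  rw [mul_zero] at hscaled
  refine hscaled.congr' ?_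
  filter_upwards [eventually_ge_atTop 0] with x hx
  simp only [gaussianPDFReal, abs_of_nonneg hx, rpow_natCast, sub_zero]
  ring_nf

lemma integrableOn_gaussianReal_iff {μ : ℝ} (hv : v ≠ 0) {f : ℝ → ℝ} {s : Set ℝ}
    (hs : MeasurableSet s) :
    IntegrableOn f s (gaussianReal μ v) ↔
      IntegrableOn (fun x ↦ gaussianPDFReal μ v x * f x) s := by
  rw [IntegrableOn, gaussianReal_of_var_ne_zero μ hv, restrict_withDensity hs,
    integrable_withDensity_iff_integrable_smul' (measurable_gaussianPDF μ v)
      (ae_of_all _ fun _ ↦ gaussianPDF_lt_top)]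
  simp only [toReal_gaussianPDF, smul_eq_mul, IntegrableOn]

lemma setIntegral_gaussianReal_eq_setIntegral_mul {μ : ℝ} (hv : v ≠ 0) (f : ℝ → ℝ) {s : Set ℝ}
    (hs : MeasurableSet s) :
    ∫ x in s, f x ∂gaussianReal μ v = ∫ x in s, gaussianPDFReal μ v x * f x := by
  rw [gaussianReal_of_var_ne_zero μ hv,
    setIntegral_withDensity_eq_setIntegral_toReal_smul (measurable_gaussianPDF μ v)
      (ae_of_all _ fun _ ↦ gaussianPDF_lt_top) f hs]
  simp only [toReal_gaussianPDF, smul_eq_mul]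

-- Stein's identity on a half-line: the integrand is `-(p h)' / p`, with `p` the density.
lemma setIntegral_Ioi_gaussianReal_stein (hv : v ≠ 0) {h h' : ℝ → ℝ} {m : ℝ}
    (hderiv : ∀ x ∈ Ici m, HasDerivAt h (h' x) x)
    (hint : IntegrableOn (fun x ↦ x / v * h x - h' x) (Ioi m) (gaussianReal 0 v))
    (hlim : Tendsto (fun x ↦ h x * gaussianPDFReal 0 v x) atTop (𝓝 0)) :
    ∫ x in Ioi m, (x / v * h x - h' x) ∂gaussianReal 0 v = h m * gaussianPDFReal 0 v m := by
  have hprimitive : ∀ x ∈ Ici m, HasDerivAt (fun y ↦ -(h y * gaussianPDFReal 0 v y))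
      (gaussianPDFReal 0 v x * (x / v * h x - h' x)) x := fun x hx ↦
    ((hderiv x hx).mul (hasDerivAt_gaussianPDFReal 0 v x)).neg.congr_deriv (by ring)
  rw [integrableOn_gaussianReal_iff hv measurableSet_Ioi] at hint
  rw [setIntegral_gaussianReal_eq_setIntegral_mul hv _ measurableSet_Ioi,
    integral_Ioi_of_hasDerivAt_of_tendsto' hprimitive hint (by simpa using hlim.neg)]
  ring

lemma gaussianReal_real_Ioi_pos (μ : ℝ) (hv : v ≠ 0) (m : ℝ) :
    0 < (gaussianReal μ v).real (Ioi m) := by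
  refine ENNReal.toReal_pos (fun hzero ↦ ?_) (measure_ne_top _ _)
  simpa using gaussianReal_absolutelyContinuous' μ hv hzero

lemma setIntegral_Ioi_sq_gaussianReal (hv : v ≠ 0) (m : ℝ) :
    ∫ x in Ioi m, x ^ 2 ∂gaussianReal 0 v =
      v * (gaussianReal 0 v).real (Ioi m) + v * m * gaussianPDFReal 0 v m := by
  have hv_coe : (v : ℝ) ≠ 0 := by exact_mod_cast hv
  have hsq : IntegrableOn (fun x : ℝ ↦ x ^ 2) (Ioi m) (gaussianReal 0 v) :=
    (memLp_id_gaussianReal 2).integrable_sq.integrableOn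
  have hconst : IntegrableOn (fun _ : ℝ ↦ (v : ℝ)) (Ioi m) (gaussianReal 0 v) :=
    integrableOn_const
  have hintegrand : (fun x : ℝ ↦ x / v * (v * x) - v) = fun x ↦ x ^ 2 - (v : ℝ) := by
    ext x
    field_simp
  have hstein := setIntegral_Ioi_gaussianReal_stein hv (h := fun x ↦ v * x) (h' := fun _ ↦ v)
    (m := m) (fun x _ ↦ by simpa using (hasDerivAt_id x).const_mul (v : ℝ))
    (by rw [hintegrand]; exact hsq.sub hconst)
    (by simpa [mul_assoc] using (tendsto_pow_mul_gaussianPDFReal_atTop hv 1).const_mul (v : ℝ))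
  rw [hintegrand, integral_sub hsq hconst, setIntegral_const, smul_eq_mul] at hstein
  linarith

end GaussianDensity

section MillsRatio

/-- The hazard rate (inverse Mills ratio) of the centred Gaussian law of variance `v`: its density
at `m` divided by the mass of its tail beyond `m`. -/
noncomputable def gaussianHazard (v : ℝ≥0) (m : ℝ) : ℝ :=
  gaussianPDFReal 0 v m / (gaussianReal 0 v).real (Ioi m)

/-- The first three terms of the asymptotic series at `+∞` of the Mills ratio (the reciprocal of
the hazard rate) of the centred Gaussian law of variance `v`. -/
noncomputable def millsPartialSum (v x : ℝ) : ℝ :=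
  v / x - v ^ 2 / x ^ 3 + 3 * v ^ 3 / x ^ 5

lemma hasDerivAt_millsPartialSum (v : ℝ) {x : ℝ} (hx : x ≠ 0) :
    HasDerivAt (millsPartialSum v) (-v / x ^ 2 + 3 * v ^ 2 / x ^ 4 - 15 * v ^ 3 / x ^ 6) x := by
  have hterm (c : ℝ) (n : ℕ) : HasDerivAt (fun y ↦ c / y ^ n) (-(c * (n * x ^ (n - 1))) /
      (x ^ n) ^ 2) x := by
    simpa using (hasDerivAt_const x c).fun_div (hasDerivAt_pow n x) (pow_ne_zero n hx)
  have hsum := ((hterm v 1).sub (hterm (v ^ 2) 3)).add (hterm (3 * v ^ 3) 5)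
  simp only [pow_one] at hsum
  refine hsum.congr_deriv ?_
  push_cast
  field_simp
  ring

lemma tendsto_const_div_pow_atTop (c : ℝ) {n : ℕ} (hn : n ≠ 0) :
    Tendsto (fun x : ℝ ↦ c / x ^ n) atTop (𝓝 0) :=
  (tendsto_pow_atTop hn).const_div_atTop c

lemma tendsto_millsPartialSum_atTop (v : ℝ) : Tendsto (millsPartialSum v) atTop (𝓝 0) := by
  have hlim := ((tendsto_const_div_pow_atTop v one_ne_zero).sub
    (tendsto_const_div_pow_atTop (v ^ 2) three_ne_zero)).add
    (tendsto_const_div_pow_atTop (3 * v ^ 3) (n := 5) (by norm_num))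
  simp only [pow_one, sub_zero, add_zero] at hlim
  exact hlim

variable {v : ℝ≥0}

lemma integrableOn_Ioi_one_add_div_pow {μ : Measure ℝ} [IsFiniteMeasure μ] (c : ℝ) {m : ℝ}
    (hm : 0 < m) (n : ℕ) : IntegrableOn (fun x ↦ 1 + c / x ^ n) (Ioi m) μ := by
  refine IntegrableOn.of_bound (measure_lt_top _ _)
    (Measurable.aestronglyMeasurable (by fun_prop)) (1 + |c| / m ^ n) ?_
  refine ae_restrict_of_forall_mem measurableSet_Ioi fun x hx ↦ ?_
  have hx_pos : 0 < x := hm.trans hx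
  have hmx : m ≤ x := le_of_lt hx
  calc ‖1 + c / x ^ n‖ ≤ ‖(1 : ℝ)‖ + ‖c / x ^ n‖ := norm_add_le _ _
    _ = 1 + |c| / x ^ n := by simp [abs_of_pos hx_pos]
    _ ≤ 1 + |c| / m ^ n := by gcongr

lemma setIntegral_Ioi_gaussianReal_one_add_div_pow_six (hv : v ≠ 0) {m : ℝ} (hm : 0 < m) :
    ∫ x in Ioi m, (1 + 15 * (v : ℝ) ^ 3 / x ^ 6) ∂gaussianReal 0 v =
      millsPartialSum v m * gaussianPDFReal 0 v m := by
  have hv_coe : (v : ℝ) ≠ 0 := by exact_mod_cast hv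
  have hintegrand : EqOn (fun x : ℝ ↦ x / v * millsPartialSum v x -
      (-v / x ^ 2 + 3 * v ^ 2 / x ^ 4 - 15 * v ^ 3 / x ^ 6)) (fun x ↦ 1 + 15 * (v : ℝ) ^ 3 / x ^ 6)
      (Ioi m) := fun x hx ↦ by
    have hx_ne : x ≠ 0 := (hm.trans hx).ne'
    simp only [millsPartialSum]
    field_simp
    ring
  rw [← setIntegral_congr_fun measurableSet_Ioi hintegrand]
  refine setIntegral_Ioi_gaussianReal_stein hv
    (fun x hx ↦ hasDerivAt_millsPartialSum v (hm.trans_le hx).ne')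
    ((integrableOn_Ioi_one_add_div_pow _ hm 6).congr_fun hintegrand.symm measurableSet_Ioi) ?_
  simpa using (tendsto_millsPartialSum_atTop v).mul (tendsto_pow_mul_gaussianPDFReal_atTop hv 0)

lemma millsPartialSum_mul_gaussianHazard_mem_Icc (hv : v ≠ 0) {m : ℝ} (hm : 0 < m) :
    millsPartialSum v m * gaussianHazard v m ∈ Icc 1 (1 + 15 * (v : ℝ) ^ 3 / m ^ 6) := by
  have hint := integrableOn_Ioi_one_add_div_pow (μ := gaussianReal 0 v) (15 * (v : ℝ) ^ 3) hm 6
  have htail : (gaussianReal 0 v).real (Ioi m) = ∫ _ in Ioi m, (1 : ℝ) ∂gaussianReal 0 v := by simp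
  have htail_pos := gaussianReal_real_Ioi_pos 0 hv m
  rw [gaussianHazard, ← mul_div_assoc, ← setIntegral_Ioi_gaussianReal_one_add_div_pow_six hv hm]
  constructor
  · rw [one_le_div htail_pos, htail]
    refine setIntegral_mono_on integrableOn_const hint measurableSet_Ioi fun x hx ↦ ?_
    have hx_pos : 0 < x := hm.trans hx
    exact le_add_of_nonneg_right (by positivity)
  · rw [div_le_iff₀ htail_pos, mul_comm _ (Measure.real _ _), ← smul_eq_mul (Measure.real _ _),
      ← setIntegral_const]
    refine setIntegral_mono_on hint integrableOn_const measurableSet_Ioi fun x hx ↦ ?_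
    have hmx : m ≤ x := le_of_lt hx
    gcongr

lemma isBigO_millsPartialSum_mul_gaussianHazard_sub_one (hv : v ≠ 0) :
    (fun m ↦ millsPartialSum v m * gaussianHazard v m - 1) =O[atTop]
      fun m : ℝ ↦ m ^ (-(6 : ℤ)) := by
  refine IsBigO.of_bound (15 * (v : ℝ) ^ 3) ?_
  filter_upwards [eventually_gt_atTop 0] with m hm
  obtain ⟨hlower, hupper⟩ := millsPartialSum_mul_gaussianHazard_mem_Icc hv hm
  rw [norm_of_nonneg (by linarith), norm_of_nonneg (by positivity), zpow_neg, ← div_eq_mul_inv]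
  exact_mod_cast sub_le_iff_le_add'.2 hupper

lemma tendsto_div_mul_millsPartialSum_atTop {v : ℝ} (hv : v ≠ 0) :
    Tendsto (fun m ↦ m / v * millsPartialSum v m) atTop (𝓝 1) := by
  have hlim : Tendsto (fun m : ℝ ↦ 1 - v / m ^ 2 + 3 * v ^ 2 / m ^ 4) atTop (𝓝 1) := by
    simpa using (tendsto_const_nhds.sub (tendsto_const_div_pow_atTop v (n := 2) (by norm_num))).add
      (tendsto_const_div_pow_atTop (3 * v ^ 2) (n := 4) (by norm_num))
  refine hlim.congr' ?_
  filter_upwards [eventually_ne_atTop 0] with m hm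
  simp only [millsPartialSum]
  field_simp

lemma isLittleO_zpow_zpow_atTop_of_lt {p q : ℤ} (hpq : p < q) :
    (fun x : ℝ ↦ x ^ p) =o[atTop] fun x ↦ x ^ q := by
  refine (isLittleO_iff_tendsto' ?_).2 ?_
  · filter_upwards [eventually_ne_atTop 0] with x hx hzero
    exact absurd hzero (zpow_ne_zero q hx)
  · refine (tendsto_zpow_atTop_zero (sub_neg.2 hpq)).congr' ?_
    filter_upwards [eventually_ne_atTop 0] with x hx
    exact zpow_sub₀ hx p q

-- Multiplied by `m / v * millsPartialSum v m`, which tends to `1`, the error becomes an explicit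
-- combination of `millsPartialSum v m * gaussianHazard v m - 1` and powers of `m`.
lemma isBigO_gaussianHazard_sub (hv : v ≠ 0) :
    (fun m : ℝ ↦ v * m * gaussianHazard v m - (m ^ 2 + v - 2 * v ^ 2 / m ^ 2)) =O[atTop]
      fun m : ℝ ↦ m ^ (-(4 : ℤ)) := by
  have hv_coe : (v : ℝ) ≠ 0 := by exact_mod_cast hv
  set error := fun m : ℝ ↦ v * m * gaussianHazard v m - (m ^ 2 + v - 2 * v ^ 2 / m ^ 2)
  set factor := fun m : ℝ ↦ m / v * millsPartialSum v m
  have hhazard : (fun m ↦ m ^ (2 : ℤ) * (millsPartialSum v m * gaussianHazard v m - 1))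
      =O[atTop] fun m : ℝ ↦ m ^ (-(4 : ℤ)) := by
    refine ((isBigO_refl (fun m : ℝ ↦ m ^ (2 : ℤ)) atTop).mul
      (isBigO_millsPartialSum_mul_gaussianHazard_sub_one hv)).congr' .rfl ?_
    filter_upwards [eventually_ne_atTop 0] with m hm
    rw [← zpow_add₀ hm]
    norm_num
  have hpowers : (fun m : ℝ ↦ 5 * (v : ℝ) ^ 3 * m ^ (-(4 : ℤ)) - 6 * (v : ℝ) ^ 4 * m ^ (-(6 : ℤ)))
      =O[atTop] fun m : ℝ ↦ m ^ (-(4 : ℤ)) :=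
    (isBigO_const_mul_self _ _ _).sub
      ((isLittleO_zpow_zpow_atTop_of_lt (by norm_num)).isBigO.const_mul_left _)
  have hproduct : (factor * error) =O[atTop] fun m : ℝ ↦ m ^ (-(4 : ℤ)) := by
    refine (hhazard.sub hpowers).congr' ?_ .rfl
    filter_upwards [eventually_ne_atTop 0] with m hm
    simp only [factor, error, millsPartialSum, Pi.mul_apply, zpow_neg, zpow_ofNat]
    field_simp
    ring
  have hfactor : factor ~[atTop] fun _ ↦ 1 :=
    (isEquivalent_const_iff_tendsto one_ne_zero).2 (tendsto_div_mul_millsPartialSum_atTop hv_coe)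
  have hequiv : factor * error ~[atTop] error := by
    simpa [Pi.mul_def] using hfactor.mul (IsEquivalent.refl (u := error))
  exact hequiv.isBigO_symm.trans hproduct

lemma integral_sq_gaussianReal_cond_Ioi (hv : v ≠ 0) (m : ℝ) :
    ∫ x, x ^ 2 ∂(gaussianReal 0 v)[|Ioi m] = v + v * m * gaussianHazard v m := by
  have htail_pos := gaussianReal_real_Ioi_pos 0 hv m
  rw [ProbabilityTheory.cond, integral_smul_measure, setIntegral_Ioi_sq_gaussianReal hv,
    ENNReal.toReal_inv, ← Measure.real, smul_eq_mul, gaussianHazard]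
  field_simp

end MillsRatio

section Conditioning

variable {Ω : Type*} {mΩ : MeasurableSpace Ω} {μ : Measure Ω}

lemma condExpEvent_eq_integral_cond {Ω : Type*} [MeasureSpace Ω] (X : Ω → ℝ) (s : Set Ω) :
    condExpEvent X s = ∫ ω, X ω ∂ℙ[|s] := by
  rw [condExpEvent, ProbabilityTheory.cond, integral_smul_measure, ENNReal.toReal_inv, smul_eq_mul,
    div_eq_inv_mul]

lemma integrable_cond {E : Type*} [NormedAddCommGroup E] {f : Ω → E} {s : Set Ω}
    (hf : Integrable f μ) (hμs : μ s ≠ 0) : Integrable f μ[|s] :=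
  hf.restrict.smul_measure (ENNReal.inv_ne_top.2 hμs)

variable {α β : Type*} {mα : MeasurableSpace α} {mβ : MeasurableSpace β} {Y : Ω → α} {Z : Ω → β}
  {s : Set α}

lemma integral_comp_cond_preimage {E : Type*} [NormedAddCommGroup E] [NormedSpace ℝ E]
    (hY : AEMeasurable Y μ) (hs : MeasurableSet s) {f : α → E}
    (hf : AEStronglyMeasurable f (μ.map Y)) :
    ∫ ω, f (Y ω) ∂μ[|Y ⁻¹' s] = ∫ y, f y ∂(μ.map Y)[|s] := by
  simp only [ProbabilityTheory.cond, integral_smul_measure]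
  rw [setIntegral_map hs hf hY, Measure.map_apply_of_aemeasurable hY hs]

lemma integral_comp_mul_comp_cond_preimage_of_indepFun (hYZ : IndepFun Y Z μ)
    (hY : AEMeasurable Y μ) (hZ : AEMeasurable Z μ) (hs : MeasurableSet s) {f : α → ℝ} {g : β → ℝ}
    (hf : AEStronglyMeasurable f (μ.map Y)) (hg : AEStronglyMeasurable g (μ.map Z)) :
    ∫ ω, f (Y ω) * g (Z ω) ∂μ[|Y ⁻¹' s] =
      (∫ ω, f (Y ω) ∂μ[|Y ⁻¹' s]) * ∫ ω, g (Z ω) ∂μ := by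
  have hpreimage : NullMeasurableSet (Y ⁻¹' s) μ := hY.nullMeasurableSet_preimage hs
  have hproduct := hYZ.integral_fun_comp_mul_comp hY hZ (hf.indicator hs) hg
  simp only [ProbabilityTheory.cond, integral_smul_measure, smul_eq_mul,
    ← integral_indicator₀ hpreimage, mul_assoc]
  rw [show (Y ⁻¹' s).indicator (fun ω ↦ f (Y ω)) = fun ω ↦ s.indicator f (Y ω) from rfl,
    ← hproduct]
  simp only [indicator_mul_left]
  rfl

lemma integral_comp_cond_preimage_of_indepFun [IsFiniteMeasure μ] (hYZ : IndepFun Y Z μ)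
    (hY : AEMeasurable Y μ) (hZ : AEMeasurable Z μ) (hs : MeasurableSet s) (hμs : μ (Y ⁻¹' s) ≠ 0)
    {g : β → ℝ} (hg : AEStronglyMeasurable g (μ.map Z)) :
    ∫ ω, g (Z ω) ∂μ[|Y ⁻¹' s] = ∫ ω, g (Z ω) ∂μ := by
  have := cond_isProbabilityMeasure hμs
  simpa using integral_comp_mul_comp_cond_preimage_of_indepFun hYZ hY hZ hs (f := fun _ ↦ 1)
    aestronglyMeasurable_const hg

end Conditioning

section GaussianPair

/-- `(X, Y)` is a centred Gaussian vector, possibly degenerate, with covariance matrix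
`[[a, c], [c, b]]`. -/
structure IsCenteredGaussianPair {Ω : Type*} {mΩ : MeasurableSpace Ω} (X Y : Ω → ℝ) (a b c : ℝ)
    (μ : Measure Ω) : Prop where
  hasGaussianLaw : HasGaussianLaw (fun ω ↦ (X ω, Y ω)) μ
  integral_fst : μ[X] = 0
  integral_snd : μ[Y] = 0
  variance_fst : Var[X; μ] = a
  variance_snd : Var[Y; μ] = b
  covariance_eq : cov[X, Y; μ] = c

variable {Ω : Type*} {mΩ : MeasurableSpace Ω} {μ : Measure Ω} {X Y : Ω → ℝ} {a b c : ℝ}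

lemma hasGaussianLaw_prodMk_of_forall_linearCombination (hX : AEMeasurable X μ)
    (hY : AEMeasurable Y μ)
    (hlin : ∀ u v : ℝ, HasGaussianLaw (fun ω ↦ u * X ω + v * Y ω) μ) :
    HasGaussianLaw (fun ω ↦ (X ω, Y ω)) μ := by
  refine ⟨isGaussian_of_isGaussian_map fun L ↦ ?_⟩
  have hL : L ∘ (fun ω ↦ (X ω, Y ω)) = fun ω ↦ L (1, 0) * X ω + L (0, 1) * Y ω := by
    ext ω
    have hdecomp : (X ω, Y ω) = X ω • ((1 : ℝ), (0 : ℝ)) + Y ω • ((0 : ℝ), (1 : ℝ)) := by simp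
    rw [Function.comp_apply, hdecomp, map_add, map_smul, map_smul, smul_eq_mul, smul_eq_mul,
      mul_comm, mul_comm (Y ω)]
  rw [AEMeasurable.map_map_of_aemeasurable (by fun_prop) (by fun_prop), hL]
  exact (hlin _ _).isGaussian_map

lemma variance_linearCombination [IsFiniteMeasure μ] (hX : MemLp X 2 μ) (hY : MemLp Y 2 μ)
    (p q : ℝ) : Var[fun ω ↦ p * X ω + q * Y ω; μ] =
      p ^ 2 * Var[X; μ] + 2 * p * q * cov[X, Y; μ] + q ^ 2 * Var[Y; μ] := by
  rw [variance_fun_add (hX.const_mul p) (hY.const_mul q), variance_const_mul, variance_const_mul,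
    covariance_const_mul_left, covariance_const_mul_right]
  ring

lemma covariance_linearCombination [IsFiniteMeasure μ] (hX : MemLp X 2 μ) (hY : MemLp Y 2 μ)
    (p q r t : ℝ) : cov[fun ω ↦ p * X ω + q * Y ω, fun ω ↦ r * X ω + t * Y ω; μ] =
      p * r * Var[X; μ] + (p * t + q * r) * cov[X, Y; μ] + q * t * Var[Y; μ] := by
  change cov[(fun ω ↦ p * X ω) + fun ω ↦ q * Y ω, (fun ω ↦ r * X ω) + fun ω ↦ t * Y ω; μ] = _
  rw [covariance_add_left (hX.const_mul p) (hY.const_mul q)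
      ((hX.const_mul r).add (hY.const_mul t)),
    covariance_add_right (hX.const_mul p) (hX.const_mul r) (hY.const_mul t),
    covariance_add_right (hY.const_mul q) (hX.const_mul r) (hY.const_mul t)]
  simp only [covariance_const_mul_left, covariance_const_mul_right, covariance_comm Y X,
    covariance_self hX.aemeasurable, covariance_self hY.aemeasurable]
  ring

namespace IsCenteredGaussianPair

lemma of_hasLaw_linearCombination (ha : 0 ≤ a) (hb : 0 ≤ b) (habc : 0 ≤ a + b + 2 * c)
    (hlaw : ∀ u v : ℝ, HasLaw (fun ω ↦ u * X ω + v * Y ω)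
      (gaussianReal 0 (u ^ 2 * a + 2 * u * v * c + v ^ 2 * b).toNNReal) μ) :
    IsCenteredGaussianPair X Y a b c μ := by
  have hlaw_X : HasLaw X (gaussianReal 0 a.toNNReal) μ := by simpa using hlaw 1 0
  have hlaw_Y : HasLaw Y (gaussianReal 0 b.toNNReal) μ := by simpa using hlaw 0 1
  have hlaw_add : HasLaw (fun ω ↦ X ω + Y ω) (gaussianReal 0 (a + b + 2 * c).toNNReal) μ := by
    simpa [add_right_comm] using hlaw 1 1
  have : IsFiniteMeasure μ := hlaw_X.isFiniteMeasure
  have hvar_X : Var[X; μ] = a := by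
    rw [hlaw_X.variance_eq, variance_id_gaussianReal, coe_toNNReal a ha]
  have hvar_Y : Var[Y; μ] = b := by
    rw [hlaw_Y.variance_eq, variance_id_gaussianReal, coe_toNNReal b hb]
  have hvar_add : Var[fun ω ↦ X ω + Y ω; μ] = a + b + 2 * c := by
    rw [hlaw_add.variance_eq, variance_id_gaussianReal, coe_toNNReal _ habc]
  rw [variance_fun_add hlaw_X.hasGaussianLaw.memLp_two hlaw_Y.hasGaussianLaw.memLp_two, hvar_X,
    hvar_Y] at hvar_add
  exact {
    hasGaussianLaw := hasGaussianLaw_prodMk_of_forall_linearCombination hlaw_X.aemeasurable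
      hlaw_Y.aemeasurable fun u v ↦ (hlaw u v).hasGaussianLaw
    integral_fst := by rw [hlaw_X.integral_eq, integral_id_gaussianReal]
    integral_snd := by rw [hlaw_Y.integral_eq, integral_id_gaussianReal]
    variance_fst := hvar_X
    variance_snd := hvar_Y
    covariance_eq := by linarith }

lemma linearCombination (h : IsCenteredGaussianPair X Y a b c μ) (p q r t : ℝ) :
    IsCenteredGaussianPair (fun ω ↦ p * X ω + q * Y ω) (fun ω ↦ r * X ω + t * Y ω)
      (p ^ 2 * a + 2 * p * q * c + q ^ 2 * b) (r ^ 2 * a + 2 * r * t * c + t ^ 2 * b)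
      (p * r * a + (p * t + q * r) * c + q * t * b) μ := by
  have := h.hasGaussianLaw.isProbabilityMeasure
  have hX := h.hasGaussianLaw.fst.memLp_two
  have hY := h.hasGaussianLaw.snd.memLp_two
  have hmean (u v : ℝ) : ∫ ω, (u * X ω + v * Y ω) ∂μ = 0 := by
    rw [integral_add (h.hasGaussianLaw.fst.integrable.const_mul u)
      (h.hasGaussianLaw.snd.integrable.const_mul v), integral_const_mul, integral_const_mul,
      h.integral_fst, h.integral_snd]
    ring
  let L : ℝ × ℝ →L[ℝ] ℝ × ℝ :=
    (p • ContinuousLinearMap.fst ℝ ℝ ℝ + q • ContinuousLinearMap.snd ℝ ℝ ℝ).prod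
      (r • ContinuousLinearMap.fst ℝ ℝ ℝ + t • ContinuousLinearMap.snd ℝ ℝ ℝ)
  refine ⟨h.hasGaussianLaw.map_fun L, hmean p q, hmean r t, ?_, ?_, ?_⟩
  · rw [variance_linearCombination hX hY, h.variance_fst, h.variance_snd, h.covariance_eq]
  · rw [variance_linearCombination hX hY, h.variance_fst, h.variance_snd, h.covariance_eq]
  · rw [covariance_linearCombination hX hY, h.variance_fst, h.variance_snd, h.covariance_eq]

lemma add_right (h : IsCenteredGaussianPair X Y a b c μ) :
    IsCenteredGaussianPair X (fun ω ↦ X ω + Y ω) a (a + b + 2 * c) (a + c) μ := by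
  simpa [add_right_comm] using h.linearCombination 1 0 1 1

lemma residual (h : IsCenteredGaussianPair X Y a b c μ) (hb : b ≠ 0) :
    IsCenteredGaussianPair Y (fun ω ↦ X ω - c / b * Y ω) b (a - c ^ 2 / b) 0 μ := by
  convert h.linearCombination 0 1 1 (-(c / b)) using 1
  · simp
  · ext; ring
  · ring
  · field_simp
    ring
  · field_simp
    ring

lemma map_snd_eq_gaussianReal (h : IsCenteredGaussianPair X Y a b c μ) :
    μ.map Y = gaussianReal 0 b.toNNReal := by
  rw [h.hasGaussianLaw.snd.map_eq_gaussianReal, h.integral_snd, h.variance_snd]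

lemma integral_sq_cond_preimage (h : IsCenteredGaussianPair X Y a b c μ) (hb : b ≠ 0)
    {s : Set ℝ} (hs : MeasurableSet s) (hμs : μ (Y ⁻¹' s) ≠ 0) :
    ∫ ω, X ω ^ 2 ∂μ[|Y ⁻¹' s] =
      (c / b) ^ 2 * ∫ ω, Y ω ^ 2 ∂μ[|Y ⁻¹' s] + (a - c ^ 2 / b) := by
  have hres := h.residual hb
  set R : Ω → ℝ := fun ω ↦ X ω - c / b * Y ω
  have := h.hasGaussianLaw.isProbabilityMeasure
  have hY := hres.hasGaussianLaw.fst
  have hR := hres.hasGaussianLaw.snd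
  have hind : IndepFun Y R μ :=
    hres.hasGaussianLaw.indepFun_of_covariance_eq_zero hres.covariance_eq
  have hcross : ∫ ω, Y ω * R ω ∂μ[|Y ⁻¹' s] = 0 := by
    rw [integral_comp_mul_comp_cond_preimage_of_indepFun hind hY.aemeasurable hR.aemeasurable hs
      (f := fun y ↦ y) (g := fun r ↦ r) (by fun_prop) (by fun_prop), hres.integral_snd, mul_zero]
  have hsq : ∫ ω, R ω ^ 2 ∂μ[|Y ⁻¹' s] = a - c ^ 2 / b := by
    rw [integral_comp_cond_preimage_of_indepFun hind hY.aemeasurable hR.aemeasurable hs hμs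
      (g := fun r ↦ r ^ 2) (by fun_prop), ← hres.variance_snd,
      variance_of_integral_eq_zero hR.aemeasurable hres.integral_snd]
  have hYY : Integrable (fun ω ↦ (c / b) ^ 2 * Y ω ^ 2) μ[|Y ⁻¹' s] :=
    (integrable_cond hY.memLp_two.integrable_sq hμs).const_mul _
  have hYR : Integrable (fun ω ↦ 2 * (c / b) * (Y ω * R ω)) μ[|Y ⁻¹' s] :=
    (integrable_cond (hY.memLp_two.integrable_mul hR.memLp_two) hμs).const_mul _
  have hRR : Integrable (fun ω ↦ R ω ^ 2) μ[|Y ⁻¹' s] :=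
    integrable_cond hR.memLp_two.integrable_sq hμs
  have hexpand (ω : Ω) :
      X ω ^ 2 = (c / b) ^ 2 * Y ω ^ 2 + 2 * (c / b) * (Y ω * R ω) + R ω ^ 2 := by
    simp only [R]
    ring
  simp only [hexpand]
  rw [integral_add (hYY.fun_add hYR) hRR, integral_add hYY hYR, integral_const_mul,
    integral_const_mul, hcross, hsq, mul_zero, add_zero]

lemma integral_sq_cond_preimage_Ioi (h : IsCenteredGaussianPair X Y a b c μ) (hb : 0 < b) (m : ℝ) :
    ∫ ω, X ω ^ 2 ∂μ[|Y ⁻¹' Ioi m] =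
      (c / b) ^ 2 * (b * m * gaussianHazard b.toNNReal m) + a := by
  have hv : b.toNNReal ≠ 0 := (toNNReal_pos.2 hb).ne'
  have hY := h.hasGaussianLaw.snd.aemeasurable
  have hμ : μ (Y ⁻¹' Ioi m) ≠ 0 := by
    rw [← Measure.map_apply_of_aemeasurable hY measurableSet_Ioi, h.map_snd_eq_gaussianReal]
    exact (measureReal_ne_zero_iff).1 (gaussianReal_real_Ioi_pos 0 hv m).ne'
  rw [h.integral_sq_cond_preimage hb.ne' measurableSet_Ioi hμ,
    integral_comp_cond_preimage hY measurableSet_Ioi (f := fun y ↦ y ^ 2) (by fun_prop),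
    h.map_snd_eq_gaussianReal, integral_sq_gaussianReal_cond_Ioi hv, coe_toNNReal b hb.le]
  field_simp
  ring

lemma isBigO_integral_sq_cond_preimage_Ioi_sub (h : IsCenteredGaussianPair X Y a b c μ)
    (hb : 0 < b) :
    (fun m : ℝ ↦ ∫ ω, X ω ^ 2 ∂μ[|Y ⁻¹' Ioi m] -
        (c ^ 2 / b ^ 2 * m ^ 2 + c ^ 2 / b + a - 2 * c ^ 2 / m ^ 2))
      =O[atTop] fun m : ℝ ↦ m ^ (-(4 : ℤ)) := by
  have hhazard := (isBigO_gaussianHazard_sub (toNNReal_pos.2 hb).ne').const_mul_left ((c / b) ^ 2)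
  refine hhazard.congr_left fun m ↦ ?_
  rw [h.integral_sq_cond_preimage_Ioi hb, coe_toNNReal b hb.le]
  field_simp
  ring

end IsCenteredGaussianPair

end GaussianPair

lemma add_add_two_mul_pos_of_abs_lt_sqrt {a b c : ℝ} (ha : 0 ≤ a) (hb : 0 ≤ b)
    (hc : |c| < √(a * b)) : 0 < a + b + 2 * c := by
  have hamgm : 2 * √a * √b ≤ √a ^ 2 + √b ^ 2 := two_mul_le_add_sq _ _
  rw [sq_sqrt ha, sq_sqrt hb] at hamgm
  rw [sqrt_mul ha] at hc
  linarith [neg_abs_le c]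

theorem gaussian_condExp_sq_expansion_general {Ω : Type*} [MeasureSpace Ω] {G ξ : Ω → ℝ}
    {a b c : ℝ} (h : IsCenteredGaussianPair G ξ a b c ℙ) (hM : 0 < a + b + 2 * c) :
    (fun m : ℝ ↦ condExpEvent (fun ω ↦ G ω ^ 2) {ω | m < G ω + ξ ω} -
        ((a + c) ^ 2 / (a + b + 2 * c) ^ 2 * m ^ 2 + (a + c) ^ 2 / (a + b + 2 * c) + a
          - 2 * (a + c) ^ 2 / m ^ 2))
      =O[atTop] (fun m : ℝ ↦ m ^ (-(4 : ℤ))) := by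
  simp only [condExpEvent_eq_integral_cond]
  exact h.add_right.isBigO_integral_sq_cond_preimage_Ioi_sub hM

/-- Second conditional moment expansion:
`E[G² | M > m] = ((a+c)²/(a+b+2c)²) m² + (a+c)²/(a+b+2c) + a - 2(a+c)²/m² + o(m⁻²)`. -/
theorem gaussian_condExp_sq_expansion {Ω : Type*} [MeasureSpace Ω] [IsProbabilityMeasure (ℙ : Measure Ω)]
    (G ξ : Ω → ℝ) (hG : Measurable G) (hξ : Measurable ξ)
    (a b c : ℝ) (ha : 0 < a) (hb : 0 < b) (hc : |c| < Real.sqrt (a * b))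
    (hlaw : ∀ u v : ℝ, Measure.map (fun ω => u * G ω + v * ξ ω) ℙ =
      gaussianReal 0 (Real.toNNReal (u ^ 2 * a + 2 * u * v * c + v ^ 2 * b))) :
    (fun m : ℝ => condExpEvent (fun ω => G ω ^ 2) {ω | m < G ω + ξ ω} -
        ((a + c) ^ 2 / (a + b + 2 * c) ^ 2 * m ^ 2 + (a + c) ^ 2 / (a + b + 2 * c) + a
          - 2 * (a + c) ^ 2 / m ^ 2))
      =o[atTop] (fun m : ℝ => m ^ (-(2 : ℤ))) := by
  have hM := add_add_two_mul_pos_of_abs_lt_sqrt ha.le hb.le hc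
  have hpair : IsCenteredGaussianPair G ξ a b c ℙ :=
    .of_hasLaw_linearCombination ha.le hb.le hM.le fun u v ↦ ⟨by fun_prop, hlaw u v⟩
  exact (gaussian_condExp_sq_expansion_general hpair hM).trans_isLittleO
    (isLittleO_zpow_zpow_atTop_of_lt (by norm_num))
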